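/- arXiv:2112.11968 — 6 statements merged into one kernel-verified Lean document; each statement's English description precedes it below -/
import Mathlib

section
/- Let C : [0,1]² → [0,1] be twice continuously differentiable with C(u,0) = C(0,v) = 0, C(u,1) = u and C(1,v) = v for all u,v ∈ [0,1], and let c(u,v) = ∂²C/∂u∂v(u,v) ≥ 0 on [0,1]². Let F₁, F₂ : ℝ → ℝ be continuous, strictly increasing bijections onto (0,1) with inverses F₁⁻¹, F₂⁻¹ : (0,1) → ℝ, satisfying ∫₀¹ exp(Fᵢ⁻¹(w)) dw < ∞ for i = 1,2. Let S₁, S₂, K > 0 and define d₁(v) = F₁(ln((S₂·exp(F₂⁻¹(v)) + K)/S₁)) for v ∈ (0,1), d₃ = F₁(ln(K/S₁)), and d₂(u) = F₂(ln((S₁·exp(F₁⁻¹(u)) − K)/S₂)) for u ∈ (d₃,1). Then ∫₀¹∫₀¹ max(S₁·exp(F₁⁻¹(u)) − S₂·exp(F₂⁻¹(v)) − K, 0)·c(u,v) du dv = ∫_{d₃}¹ S₁·exp(F₁⁻¹(u))·∂C/∂u(u, d₂(u)) du − ( ∫₀¹ S₂·exp(F₂⁻¹(v)) dv − ∫₀¹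 S₂·exp(F₂⁻¹(v))·∂C/∂v(d₁(v), v) dv ) − K·(1 − ∫₀¹ ∂C/∂v(d₁(v), v) dv). -/
open Real Set MeasureTheory intervalIntegral

/-!
The payoff is supported on the exercise region `A = {(u, v) | Y v + K < X u}`, where
`X u = S₁ exp (G₁ u)` and `Y v = S₂ exp (G₂ v)`, and there it equals `X u - (Y v + K)`. By Fubini
the price is therefore the integral of `X u` against the `v`-integral of `1_A c`, minus the integral
of `Y v + K` against the `u`-integral of `1_A c`. Monotonicity of the distribution functions turns
the sections of `A` into the intervals `(d₁ v, 1)` and `(0, d₂ u)`, on which the density is the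
derivative of `∂₂C (·, v)`, respectively of `∂₁C (u, ·)`; the boundary values `∂₂C (1, v) = 1` and
`∂₁C (u, 0) = 0` follow from those of `C`.
-/

section PartialDerivatives

variable {E F : Type*} [NormedAddCommGroup E] [NormedSpace ℝ E] [NormedAddCommGroup F]
  [NormedSpace ℝ F]

/-- The partial derivative in the first variable relative to `s`. Derivatives within `s` make sense
on the boundary of the domain, where the two-sided `deriv` may take its junk value. -/
noncomputable def partialFst (f : ℝ × ℝ → F) (s : Set (ℝ × ℝ)) (p : ℝ × ℝ) : F :=
  fderivWithin ℝ f s p (1, 0)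

/-- The partial derivative in the second variable relative to `s`; see `partialFst`. -/
noncomputable def partialSnd (f : ℝ × ℝ → F) (s : Set (ℝ × ℝ)) (p : ℝ × ℝ) : F :=
  fderivWithin ℝ f s p (0, 1)

/-- The mixed second partial derivative `∂₁∂₂f` relative to `s`; the density of `f` when `f` is a
copula. -/
noncomputable def mixedPartial (f : ℝ × ℝ → F) (s : Set (ℝ × ℝ)) : ℝ × ℝ → F :=
  partialFst (partialSnd f s) s

variable {f : ℝ × ℝ → F} {s : Set (ℝ × ℝ)} {t : Set ℝ} {u v a b : ℝ} {m n : WithTop ℕ∞}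

lemma contDiffOn_partialFst (hf : ContDiffOn ℝ n f s) (hs : UniqueDiffOn ℝ s) (hmn : m + 1 ≤ n) :
    ContDiffOn ℝ m (partialFst f s) s :=
  (hf.fderivWithin hs hmn).clm_apply contDiffOn_const

lemma contDiffOn_partialSnd (hf : ContDiffOn ℝ n f s) (hs : UniqueDiffOn ℝ s) (hmn : m + 1 ≤ n) :
    ContDiffOn ℝ m (partialSnd f s) s :=
  (hf.fderivWithin hs hmn).clm_apply contDiffOn_const

lemma hasDerivAt_prodMk_left (u v : ℝ) : HasDerivAt (fun x : ℝ => (x, v)) ((1 : ℝ), (0 : ℝ)) u :=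
  (hasDerivAt_id u).prodMk (hasDerivAt_const u v)

lemma hasDerivAt_prodMk_right (u v : ℝ) : HasDerivAt (fun y : ℝ => (u, y)) ((0 : ℝ), (1 : ℝ)) v :=
  (hasDerivAt_const v u).prodMk (hasDerivAt_id v)

lemma hasDerivWithinAt_partialFst (hf : DifferentiableWithinAt ℝ f s (u, v))
    (hts : MapsTo (fun x => (x, v)) t s) :
    HasDerivWithinAt (fun x => f (x, v)) (partialFst f s (u, v)) t u :=
  HasFDerivWithinAt.comp_hasDerivWithinAt (f := fun x => (x, v)) u hf.hasFDerivWithinAt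
    (hasDerivAt_prodMk_left u v).hasDerivWithinAt hts

lemma hasDerivWithinAt_partialSnd (hf : DifferentiableWithinAt ℝ f s (u, v))
    (hts : MapsTo (fun y => (u, y)) t s) :
    HasDerivWithinAt (fun y => f (u, y)) (partialSnd f s (u, v)) t v :=
  HasFDerivWithinAt.comp_hasDerivWithinAt (f := fun y => (u, y)) v hf.hasFDerivWithinAt
    (hasDerivAt_prodMk_right u v).hasDerivWithinAt hts

lemma deriv_eq_partialFst (hf : DifferentiableWithinAt ℝ f s (u, v)) (hs : s ∈ nhds (u, v)) :
    deriv (fun x => f (x, v)) u = partialFst f s (u, v) :=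
  ((hasDerivWithinAt_partialFst hf (mapsTo_preimage _ s)).hasDerivAt
    ((hasDerivAt_prodMk_left u v).continuousAt.preimage_mem_nhds hs)).deriv

lemma deriv_eq_partialSnd (hf : DifferentiableWithinAt ℝ f s (u, v)) (hs : s ∈ nhds (u, v)) :
    deriv (fun y => f (u, y)) v = partialSnd f s (u, v) :=
  ((hasDerivWithinAt_partialSnd hf (mapsTo_preimage _ s)).hasDerivAt
    ((hasDerivAt_prodMk_right u v).continuousAt.preimage_mem_nhds hs)).deriv

lemma deriv_deriv_eq_mixedPartial (hf : ContDiffOn ℝ 2 f s) (hs : UniqueDiffOn ℝ s)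
    (huv : s ∈ nhds (u, v)) :
    deriv (fun x => deriv (fun y => f (x, y)) v) u = mixedPartial f s (u, v) := by
  have hf₁ : DifferentiableOn ℝ f s := hf.differentiableOn two_ne_zero
  have hf₂ : DifferentiableOn ℝ (partialSnd f s) s :=
    (contDiffOn_partialSnd hf hs one_add_one_eq_two.le).differentiableOn one_ne_zero
  have hinner :
      (fun x => deriv (fun y => f (x, y)) v) =ᶠ[nhds u] fun x => partialSnd f s (x, v) := by
    filter_upwards [(hasDerivAt_prodMk_left u v).continuousAt.eventually
      (eventually_mem_nhds_iff.2 huv)] with x hx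
    exact deriv_eq_partialSnd (hf₁ _ (mem_of_mem_nhds hx)) hx
  rw [hinner.deriv_eq]
  exact deriv_eq_partialFst (hf₂ _ (mem_of_mem_nhds huv)) huv

lemma mixedPartial_eq_partialSnd_partialFst (hf : ContDiffOn ℝ 2 f s) (hs : UniqueDiffOn ℝ s)
    {p : ℝ × ℝ} (hp : p ∈ s) (hp' : p ∈ closure (interior s)) :
    mixedPartial f s p = partialSnd (partialFst f s) s p := by
  have hdiff : DifferentiableWithinAt ℝ (fderivWithin ℝ f s) s p :=
    (hf.fderivWithin hs one_add_one_eq_two.le).differentiableOn one_ne_zero p hp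
  have hsymm : IsSymmSndFDerivWithinAt ℝ f s p :=
    (hf p hp).isSymmSndFDerivWithinAt (by simp) hs hp' hp
  have happly (v w : ℝ × ℝ) : fderivWithin ℝ (fun q => fderivWithin ℝ f s q w) s p v
      = fderivWithin ℝ (fderivWithin ℝ f s) s p v w := by
    rw [fderivWithin_clm_apply (hs p hp) hdiff (differentiableWithinAt_const w)]
    simp
  exact (happly _ _).trans ((hsymm _ _).trans (happly _ _).symm)

lemma integral_fderivWithin_comp [CompleteSpace F] {f : E → F} {s : Set E} {γ : ℝ → E} {w : E}
    (hf : ContDiffOn ℝ 1 f s) (hs : UniqueDiffOn ℝ s) (hγ : ∀ x, HasDerivAt γ w x) (hab : a ≤ b)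
    (hγs : MapsTo γ (Icc a b) s) :
    ∫ x in a..b, fderivWithin ℝ f s (γ x) w = f (γ b) - f (γ a) := by
  have hγc : ContinuousOn γ (Icc a b) := fun x _ => (hγ x).continuousAt.continuousWithinAt
  refine integral_eq_sub_of_hasDerivAt_of_le hab (hf.continuousOn.comp hγc hγs) (fun x hx => ?_) ?_
  · exact (((hf.differentiableOn one_ne_zero) _ (hγs (Ioo_subset_Icc_self hx))).hasFDerivWithinAt
      |>.comp_hasDerivWithinAt x (hγ x).hasDerivWithinAt hγs).hasDerivAt (Icc_mem_nhds hx.1 hx.2)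
  · apply ContinuousOn.intervalIntegrable_of_Icc hab
    exact ((hf.continuousOn_fderivWithin hs le_rfl).comp hγc hγs).clm_apply continuousOn_const

lemma integral_partialFst [CompleteSpace F] (hf : ContDiffOn ℝ 1 f s) (hs : UniqueDiffOn ℝ s)
    (hab : a ≤ b) (hseg : MapsTo (fun x => (x, v)) (Icc a b) s) :
    ∫ x in a..b, partialFst f s (x, v) = f (b, v) - f (a, v) :=
  integral_fderivWithin_comp hf hs (hasDerivAt_prodMk_left · v) hab hseg

lemma integral_partialSnd [CompleteSpace F] (hf : ContDiffOn ℝ 1 f s) (hs : UniqueDiffOn ℝ s)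
    (hab : a ≤ b) (hseg : MapsTo (fun y => (u, y)) (Icc a b) s) :
    ∫ y in a..b, partialSnd f s (u, y) = f (u, b) - f (u, a) :=
  integral_fderivWithin_comp hf hs (hasDerivAt_prodMk_right u) hab hseg

end PartialDerivatives

section Sections

variable {E : Type*} [NormedAddCommGroup E] [NormedSpace ℝ E] {h : ℝ → E} {t : Set ℝ} {l a r : ℝ}

lemma intervalIntegral_eq_setIntegral_Ioo (hlr : l ≤ r) :
    ∫ x in l..r, h x = ∫ x in Ioo l r, h x := by
  rw [integral_of_le hlr, integral_Ioc_eq_integral_Ioo]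

lemma setIntegral_Ioo_indicator_of_mem_iff_gt (hla : l ≤ a) (har : a ≤ r)
    (ht : ∀ x ∈ Ioo l r, x ∈ t ↔ a < x) :
    ∫ x in Ioo l r, t.indicator h x = ∫ x in a..r, h x := by
  have hcongr : EqOn (t.indicator h) ((Ioi a).indicator h) (Ioo l r) := fun x hx => by
    simp only [indicator, ht x hx, mem_Ioi]
  rw [setIntegral_congr_fun measurableSet_Ioo hcongr, setIntegral_indicator measurableSet_Ioi,
    Ioo_inter_Ioi, sup_eq_right.2 hla, intervalIntegral_eq_setIntegral_Ioo har]

lemma setIntegral_Ioo_indicator_of_mem_iff_lt (hla : l ≤ a) (har : a ≤ r)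
    (ht : ∀ x ∈ Ioo l r, x ∈ t ↔ x < a) :
    ∫ x in Ioo l r, t.indicator h x = ∫ x in l..a, h x := by
  have hcongr : EqOn (t.indicator h) ((Iio a).indicator h) (Ioo l r) := fun x hx => by
    simp only [indicator, ht x hx, mem_Iio]
  rw [setIntegral_congr_fun measurableSet_Ioo hcongr, setIntegral_indicator measurableSet_Iio,
    Ioo_inter_Iio, inf_eq_right.2 har, intervalIntegral_eq_setIntegral_Ioo hla]

end Sections

section ExchangeOption

variable {α β : Type*} {X : α → ℝ} {Y : β → ℝ}

/-- The states in which it pays to exchange an asset worth `Y` for one worth `X`. A spread call with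
strike `K` on `X` and `Y` is the option to exchange `Y + K` for `X`. -/
def exerciseRegion (X : α → ℝ) (Y : β → ℝ) : Set (α × β) :=
  {z | Y z.2 < X z.1}

lemma max_sub_zero_mul_eq_indicator (c : α × β → ℝ) (z : α × β) :
    max (X z.1 - Y z.2) 0 * c z
      = X z.1 * (exerciseRegion X Y).indicator c z
        - Y z.2 * (exerciseRegion X Y).indicator c z := by
  by_cases hz : Y z.2 < X z.1
  · rw [indicator_of_mem (show z ∈ exerciseRegion X Y from hz), max_eq_left (sub_nonneg.2 hz.le),
      sub_mul]
  · rw [indicator_of_notMem (show z ∉ exerciseRegion X Y from hz),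
      max_eq_right (sub_nonpos.2 (not_lt.1 hz))]
    ring

variable [MeasurableSpace α] [MeasurableSpace β] {μ : Measure α} {ν : Measure β}

lemma nullMeasurableSet_exerciseRegion (hX : AEMeasurable X μ) (hY : AEMeasurable Y ν) :
    NullMeasurableSet (exerciseRegion X Y) (μ.prod ν) :=
  nullMeasurableSet_lt hY.comp_snd hX.comp_fst

lemma integrable_mul_indicator {A : Set α} {φ c : α → ℝ} (h : Integrable (fun z => φ z * c z) μ)
    (hA : NullMeasurableSet A μ) : Integrable (fun z => φ z * A.indicator c z) μ := by
  simpa only [← indicator_mul_right] using h.indicator₀ hA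

lemma integral_integral_max_sub_zero_mul [SFinite μ] [SFinite ν] {c : α × β → ℝ}
    (hX : AEMeasurable X μ) (hY : AEMeasurable Y ν)
    (hXc : Integrable (fun z => X z.1 * c z) (μ.prod ν))
    (hYc : Integrable (fun z => Y z.2 * c z) (μ.prod ν)) :
    ∫ y, ∫ x, max (X x - Y y) 0 * c (x, y) ∂μ ∂ν
      = ∫ x, X x * ∫ y, (exerciseRegion X Y).indicator c (x, y) ∂ν ∂μ
        - ∫ y, Y y * ∫ x, (exerciseRegion X Y).indicator c (x, y) ∂μ ∂ν := by
  have hA := nullMeasurableSet_exerciseRegion hX hY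
  have hXA := integrable_mul_indicator hXc hA
  have hYA := integrable_mul_indicator hYc hA
  simp only [← MeasureTheory.integral_const_mul]
  rw [← integral_prod _ hXA, ← integral_prod_symm _ hYA, ← MeasureTheory.integral_sub hXA hYA]
  simp only [max_sub_zero_mul_eq_indicator c (_, _)]
  exact (integral_prod_symm _ (hXA.sub hYA)).symm

end ExchangeOption

section Copula

/-- The closed unit square, the domain of a copula. -/
abbrev unitSquare : Set (ℝ × ℝ) :=
  Icc 0 1 ×ˢ Icc 0 1

lemma uniqueDiffOn_unitSquare : UniqueDiffOn ℝ unitSquare :=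
  (uniqueDiffOn_Icc zero_lt_one).prod (uniqueDiffOn_Icc zero_lt_one)

lemma closure_interior_unitSquare : closure (interior unitSquare) = unitSquare := by
  rw [interior_prod_eq, closure_prod_eq, interior_Icc, closure_Ioo zero_ne_one]

lemma unitSquare_mem_nhds {u v : ℝ} (hu : u ∈ Ioo (0 : ℝ) 1) (hv : v ∈ Ioo (0 : ℝ) 1) :
    unitSquare ∈ nhds (u, v) :=
  prod_mem_nhds (Icc_mem_nhds hu.1 hu.2) (Icc_mem_nhds hv.1 hv.2)

variable {f : ℝ × ℝ → ℝ} {u v a b : ℝ}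

lemma partialFst_bottom (hf : DifferentiableOn ℝ f unitSquare)
    (hbot : ∀ u ∈ Icc (0 : ℝ) 1, f (u, 0) = 0) (hu : u ∈ Icc (0 : ℝ) 1) :
    partialFst f unitSquare (u, 0) = 0 := by
  have hmaps : MapsTo (fun x => (x, (0 : ℝ))) (Icc 0 1) unitSquare := fun x hx => ⟨hx, by simp⟩
  exact (uniqueDiffOn_Icc zero_lt_one u hu).eq_deriv _
    (hasDerivWithinAt_partialFst (hf _ (hmaps hu)) hmaps)
    ((hasDerivWithinAt_const u _ 0).congr hbot (hbot u hu))

lemma partialSnd_right (hf : DifferentiableOn ℝ f unitSquare)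
    (hright : ∀ v ∈ Icc (0 : ℝ) 1, f (1, v) = v) (hv : v ∈ Icc (0 : ℝ) 1) :
    partialSnd f unitSquare (1, v) = 1 := by
  have hmaps : MapsTo (fun y => ((1 : ℝ), y)) (Icc 0 1) unitSquare := fun y hy => ⟨by simp, hy⟩
  exact (uniqueDiffOn_Icc zero_lt_one v hv).eq_deriv _
    (hasDerivWithinAt_partialSnd (hf _ (hmaps hv)) hmaps)
    ((hasDerivWithinAt_id v _).congr hright (hright v hv))

lemma integral_mixedPartial_fst (hf : ContDiffOn ℝ 2 f unitSquare)
    (hright : ∀ v ∈ Icc (0 : ℝ) 1, f (1, v) = v) (ha : a ∈ Icc (0 : ℝ) 1)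
    (hv : v ∈ Icc (0 : ℝ) 1) :
    ∫ u in a..1, mixedPartial f unitSquare (u, v) = 1 - partialSnd f unitSquare (a, v) := by
  have hmaps : MapsTo (fun x => (x, v)) (Icc a 1) unitSquare :=
    fun x hx => ⟨⟨ha.1.trans hx.1, hx.2⟩, hv⟩
  calc ∫ u in a..1, mixedPartial f unitSquare (u, v)
      = partialSnd f unitSquare (1, v) - partialSnd f unitSquare (a, v) :=
        integral_partialFst
          (contDiffOn_partialSnd hf uniqueDiffOn_unitSquare one_add_one_eq_two.le)
          uniqueDiffOn_unitSquare ha.2 hmaps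
    _ = 1 - partialSnd f unitSquare (a, v) := by
        rw [partialSnd_right (hf.differentiableOn two_ne_zero) hright hv]

lemma integral_mixedPartial_snd (hf : ContDiffOn ℝ 2 f unitSquare)
    (hbot : ∀ u ∈ Icc (0 : ℝ) 1, f (u, 0) = 0) (hu : u ∈ Icc (0 : ℝ) 1)
    (hb : b ∈ Icc (0 : ℝ) 1) :
    ∫ v in 0..b, mixedPartial f unitSquare (u, v) = partialFst f unitSquare (u, b) := by
  have hmaps : MapsTo (fun y => (u, y)) (Icc 0 b) unitSquare :=
    fun y hy => ⟨hu, hy.1, hy.2.trans hb.2⟩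
  calc ∫ v in 0..b, mixedPartial f unitSquare (u, v)
      = ∫ v in 0..b, partialSnd (partialFst f unitSquare) unitSquare (u, v) := by
        refine integral_congr fun v hv => ?_
        have huv := hmaps (uIcc_of_le hb.1 ▸ hv)
        exact mixedPartial_eq_partialSnd_partialFst hf uniqueDiffOn_unitSquare huv
          (closure_interior_unitSquare.ge huv)
    _ = partialFst f unitSquare (u, b) - partialFst f unitSquare (u, 0) :=
        integral_partialSnd
          (contDiffOn_partialFst hf uniqueDiffOn_unitSquare one_add_one_eq_two.le)
          uniqueDiffOn_unitSquare hb.1 hmaps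
    _ = partialFst f unitSquare (u, b) := by
        rw [partialFst_bottom (hf.differentiableOn two_ne_zero) hbot hu, sub_zero]

lemma setIntegral_indicator_mixedPartial_fst (hf : ContDiffOn ℝ 2 f unitSquare)
    (hright : ∀ v ∈ Icc (0 : ℝ) 1, f (1, v) = v) (ha : a ∈ Icc (0 : ℝ) 1)
    (hv : v ∈ Icc (0 : ℝ) 1) {A : Set (ℝ × ℝ)} (hA : ∀ u ∈ Ioo (0 : ℝ) 1, (u, v) ∈ A ↔ a < u) :
    ∫ u in Ioo 0 1, A.indicator (mixedPartial f unitSquare) (u, v)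
      = 1 - partialSnd f unitSquare (a, v) :=
  (setIntegral_Ioo_indicator_of_mem_iff_gt (t := {u | (u, v) ∈ A})
    (h := fun u => mixedPartial f unitSquare (u, v)) ha.1 ha.2 hA).trans
    (integral_mixedPartial_fst hf hright ha hv)

lemma setIntegral_indicator_mixedPartial_snd (hf : ContDiffOn ℝ 2 f unitSquare)
    (hbot : ∀ u ∈ Icc (0 : ℝ) 1, f (u, 0) = 0) (hu : u ∈ Icc (0 : ℝ) 1)
    (hb : b ∈ Icc (0 : ℝ) 1) {A : Set (ℝ × ℝ)} (hA : ∀ v ∈ Ioo (0 : ℝ) 1, (u, v) ∈ A ↔ v < b) :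
    ∫ v in Ioo 0 1, A.indicator (mixedPartial f unitSquare) (u, v)
      = partialFst f unitSquare (u, b) :=
  (setIntegral_Ioo_indicator_of_mem_iff_lt (t := {v | (u, v) ∈ A})
    (h := fun v => mixedPartial f unitSquare (u, v)) hb.1 hb.2 hA).trans
    (integral_mixedPartial_snd hf hbot hu hb)

lemma integrable_mul_mixedPartial {φ : ℝ × ℝ → ℝ} (hf : ContDiffOn ℝ 2 f unitSquare)
    (hφ : Integrable φ ((volume.restrict (Ioo 0 1)).prod (volume.restrict (Ioo 0 1)))) :
    Integrable (fun z => φ z * mixedPartial f unitSquare z)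
      ((volume.restrict (Ioo 0 1)).prod (volume.restrict (Ioo 0 1))) := by
  have hcont : ContinuousOn (mixedPartial f unitSquare) unitSquare :=
    (contDiffOn_partialFst (m := 0)
      (contDiffOn_partialSnd hf uniqueDiffOn_unitSquare one_add_one_eq_two.le)
      uniqueDiffOn_unitSquare (by simp)).continuousOn
  rw [Measure.prod_restrict] at hφ ⊢
  exact IntegrableOn.mul_continuousOn_of_subset hφ hcont (measurableSet_Ioo.prod measurableSet_Ioo)
    (isCompact_Icc.prod isCompact_Icc) (prod_mono Ioo_subset_Icc_self Ioo_subset_Icc_self)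

variable {X Y : ℝ → ℝ} {d₁ d₂ : ℝ → ℝ}

lemma integrableOn_mul_one_sub_partialSnd {w : ℝ → ℝ} {A : Set (ℝ × ℝ)}
    (hf : ContDiffOn ℝ 2 f unitSquare) (hright : ∀ v ∈ Icc (0 : ℝ) 1, f (1, v) = v)
    (hA : NullMeasurableSet A ((volume.restrict (Ioo 0 1)).prod (volume.restrict (Ioo 0 1))))
    (hd₁ : ∀ v ∈ Ioo (0 : ℝ) 1, d₁ v ∈ Icc (0 : ℝ) 1)
    (hAd₁ : ∀ u ∈ Ioo (0 : ℝ) 1, ∀ v ∈ Ioo (0 : ℝ) 1, (u, v) ∈ A ↔ d₁ v < u)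
    (hw : IntegrableOn w (Ioo 0 1)) :
    IntegrableOn (fun v => w v * (1 - partialSnd f unitSquare (d₁ v, v))) (Ioo 0 1) := by
  refine IntegrableOn.congr_fun (integrable_mul_indicator
    (integrable_mul_mixedPartial hf (hw.comp_snd _)) hA).integral_prod_right (fun v hv => ?_)
    measurableSet_Ioo
  simp only [MeasureTheory.integral_const_mul]
  rw [setIntegral_indicator_mixedPartial_fst hf hright (hd₁ v hv) (Ioo_subset_Icc_self hv)
    fun u hu => hAd₁ u hu v hv]

lemma setIntegral_max_sub_zero_mul_mixedPartial (hf : ContDiffOn ℝ 2 f unitSquare)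
    (hbot : ∀ u ∈ Icc (0 : ℝ) 1, f (u, 0) = 0) (hright : ∀ v ∈ Icc (0 : ℝ) 1, f (1, v) = v)
    (hX : IntegrableOn X (Ioo 0 1)) (hY : IntegrableOn Y (Ioo 0 1))
    (hd₁ : ∀ v ∈ Ioo (0 : ℝ) 1, d₁ v ∈ Icc (0 : ℝ) 1)
    (hd₂ : ∀ u ∈ Ioo (0 : ℝ) 1, d₂ u ∈ Icc (0 : ℝ) 1)
    (hXY₁ : ∀ u ∈ Ioo (0 : ℝ) 1, ∀ v ∈ Ioo (0 : ℝ) 1, Y v < X u ↔ d₁ v < u)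
    (hXY₂ : ∀ u ∈ Ioo (0 : ℝ) 1, ∀ v ∈ Ioo (0 : ℝ) 1, Y v < X u ↔ v < d₂ u) :
    ∫ v in Ioo 0 1, ∫ u in Ioo 0 1, max (X u - Y v) 0 * mixedPartial f unitSquare (u, v)
      = (∫ u in Ioo 0 1, X u * partialFst f unitSquare (u, d₂ u))
        - ∫ v in Ioo 0 1, Y v * (1 - partialSnd f unitSquare (d₁ v, v)) := by
  rw [integral_integral_max_sub_zero_mul hX.aemeasurable hY.aemeasurable
    (integrable_mul_mixedPartial hf (hX.comp_fst _))
    (integrable_mul_mixedPartial hf (hY.comp_snd _))]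
  congr 1
  · refine setIntegral_congr_fun measurableSet_Ioo fun u hu => ?_
    rw [setIntegral_indicator_mixedPartial_snd hf hbot (Ioo_subset_Icc_self hu) (hd₂ u hu)
      fun v hv => hXY₂ u hu v hv]
  · refine setIntegral_congr_fun measurableSet_Ioo fun v hv => ?_
    rw [setIntegral_indicator_mixedPartial_fst hf hright (hd₁ v hv) (Ioo_subset_Icc_self hv)
      fun u hu => hXY₁ u hu v hv]

lemma integral_add_const_mul_one_sub {α : Type*} [MeasurableSpace α] {μ : Measure α}
    [IsFiniteMeasure μ] {w D : α → ℝ} {K : ℝ} (hw : Integrable w μ)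
    (hwD : Integrable (fun x => w x * (1 - D x)) μ) (hD : Integrable (fun x => 1 - D x) μ) :
    ∫ x, (w x + K) * (1 - D x) ∂μ
      = (∫ x, w x ∂μ - ∫ x, w x * D x ∂μ) + K * (μ.real univ - ∫ x, D x ∂μ) := by
  have hw' : ∫ x, w x * D x ∂μ = ∫ x, w x ∂μ - ∫ x, w x * (1 - D x) ∂μ := by
    rw [← MeasureTheory.integral_sub hw hwD]
    simp only [mul_one_sub, sub_sub_cancel]
  have hD' : ∫ x, D x ∂μ = μ.real univ - ∫ x, (1 - D x) ∂μ := by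
    rw [← mul_one (μ.real univ), ← smul_eq_mul, ← MeasureTheory.integral_const,
      ← MeasureTheory.integral_sub (integrable_const 1) hD]
    simp only [sub_sub_cancel]
  simp only [add_mul]
  rw [MeasureTheory.integral_add hwD (hD.const_mul K), MeasureTheory.integral_const_mul, hw', hD',
    sub_sub_cancel, sub_sub_cancel]

lemma setIntegral_max_sub_sub_zero_mul_mixedPartial {K : ℝ} (hf : ContDiffOn ℝ 2 f unitSquare)
    (hbot : ∀ u ∈ Icc (0 : ℝ) 1, f (u, 0) = 0) (hright : ∀ v ∈ Icc (0 : ℝ) 1, f (1, v) = v)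
    (hX : IntegrableOn X (Ioo 0 1)) (hY : IntegrableOn Y (Ioo 0 1))
    (hd₁ : ∀ v ∈ Ioo (0 : ℝ) 1, d₁ v ∈ Icc (0 : ℝ) 1)
    (hd₂ : ∀ u ∈ Ioo (0 : ℝ) 1, d₂ u ∈ Icc (0 : ℝ) 1)
    (hXY₁ : ∀ u ∈ Ioo (0 : ℝ) 1, ∀ v ∈ Ioo (0 : ℝ) 1, Y v + K < X u ↔ d₁ v < u)
    (hXY₂ : ∀ u ∈ Ioo (0 : ℝ) 1, ∀ v ∈ Ioo (0 : ℝ) 1, Y v + K < X u ↔ v < d₂ u) :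
    ∫ v in Ioo 0 1, ∫ u in Ioo 0 1, max (X u - Y v - K) 0 * mixedPartial f unitSquare (u, v)
      = (∫ u in Ioo 0 1, X u * partialFst f unitSquare (u, d₂ u))
        - ((∫ v in Ioo 0 1, Y v) - ∫ v in Ioo 0 1, Y v * partialSnd f unitSquare (d₁ v, v))
        - K * (1 - ∫ v in Ioo 0 1, partialSnd f unitSquare (d₁ v, v)) := by
  have hYK : IntegrableOn (fun v => Y v + K) (Ioo 0 1) := hY.add (integrable_const K)
  have hint (w : ℝ → ℝ) (hw : IntegrableOn w (Ioo 0 1)) :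
      IntegrableOn (fun v => w v * (1 - partialSnd f unitSquare (d₁ v, v))) (Ioo 0 1) :=
    integrableOn_mul_one_sub_partialSnd hf hright
      (nullMeasurableSet_exerciseRegion hX.aemeasurable hYK.aemeasurable) hd₁ hXY₁ hw
  have hone : IntegrableOn (fun v => 1 - partialSnd f unitSquare (d₁ v, v)) (Ioo 0 1) := by
    simpa only [one_mul] using hint (fun _ => 1) (integrable_const 1)
  have hsplit := integral_add_const_mul_one_sub (K := K) hY (hint Y hY) hone
  have hpayoff := setIntegral_max_sub_zero_mul_mixedPartial hf hbot hright hX hYK hd₁ hd₂ hXY₁ hXY₂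
  rw [hsplit, ← sub_sub] at hpayoff
  simpa only [sub_sub, measureReal_restrict_apply_univ, Real.volume_real_Ioo_of_le zero_le_one,
    sub_zero] using hpayoff

lemma setIntegral_mul_partialFst_indicator {d : ℝ} (hf : DifferentiableOn ℝ f unitSquare)
    (hbot : ∀ u ∈ Icc (0 : ℝ) 1, f (u, 0) = 0) (hd : d ∈ Icc (0 : ℝ) 1) :
    ∫ u in Ioo 0 1, X u * partialFst f unitSquare (u, (Ioi d).indicator d₂ u)
      = ∫ u in d..1, X u * partialFst f unitSquare (u, d₂ u) := by
  rw [← setIntegral_Ioo_indicator_of_mem_iff_gt (t := Ioi d) hd.1 hd.2 fun u _ => mem_Ioi]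
  refine setIntegral_congr_fun measurableSet_Ioo fun u hu => ?_
  by_cases hdu : u ∈ Ioi d
  · simp only [indicator_of_mem hdu]
  · simp only [indicator_of_notMem hdu, partialFst_bottom hf hbot (Ioo_subset_Icc_self hu),
      mul_zero]

lemma integral_max_sub_sub_zero_mul_deriv_deriv {K d : ℝ} (hf : ContDiffOn ℝ 2 f unitSquare)
    (hbot : ∀ u ∈ Icc (0 : ℝ) 1, f (u, 0) = 0) (hright : ∀ v ∈ Icc (0 : ℝ) 1, f (1, v) = v)
    (hX : IntegrableOn X (Ioo 0 1)) (hY : IntegrableOn Y (Ioo 0 1)) (hd : d ∈ Icc (0 : ℝ) 1)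
    (hd₁ : ∀ v ∈ Ioo (0 : ℝ) 1, d₁ v ∈ Ioo (0 : ℝ) 1)
    (hd₂ : ∀ u ∈ Ioo d 1, d₂ u ∈ Ioo (0 : ℝ) 1)
    (hXY₁ : ∀ u ∈ Ioo (0 : ℝ) 1, ∀ v ∈ Ioo (0 : ℝ) 1, Y v + K < X u ↔ d₁ v < u)
    (hXY₂ : ∀ u ∈ Ioo (0 : ℝ) 1, ∀ v ∈ Ioo (0 : ℝ) 1,
      Y v + K < X u ↔ v < (Ioi d).indicator d₂ u) :
    ∫ v in (0 : ℝ)..1, ∫ u in (0 : ℝ)..1,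
        max (X u - Y v - K) 0 * deriv (fun x => deriv (fun y => f (x, y)) v) u
      = (∫ u in d..1, X u * deriv (fun x => f (x, d₂ u)) u)
        - ((∫ v in (0 : ℝ)..1, Y v) - ∫ v in (0 : ℝ)..1, Y v * deriv (fun y => f (d₁ v, y)) v)
        - K * (1 - ∫ v in (0 : ℝ)..1, deriv (fun y => f (d₁ v, y)) v) := by
  have hf' : DifferentiableOn ℝ f unitSquare := hf.differentiableOn two_ne_zero
  have hd₂' : ∀ u ∈ Ioo (0 : ℝ) 1, (Ioi d).indicator d₂ u ∈ Icc (0 : ℝ) 1 := fun u hu => by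
    by_cases hdu : u ∈ Ioi d
    · rw [indicator_of_mem hdu]
      exact Ioo_subset_Icc_self (hd₂ u ⟨hdu, hu.2⟩)
    · simp [indicator_of_notMem hdu]
  have hfst : ∀ u ∈ Ioo d 1,
      deriv (fun x => f (x, d₂ u)) u = partialFst f unitSquare (u, d₂ u) := fun u hu =>
    have huv := unitSquare_mem_nhds ⟨hd.1.trans_lt hu.1, hu.2⟩ (hd₂ u hu)
    deriv_eq_partialFst (hf' _ (mem_of_mem_nhds huv)) huv
  have hsnd : ∀ v ∈ Ioo (0 : ℝ) 1,
      deriv (fun y => f (d₁ v, y)) v = partialSnd f unitSquare (d₁ v, v) := fun v hv =>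
    have huv := unitSquare_mem_nhds (hd₁ v hv) hv
    deriv_eq_partialSnd (hf' _ (mem_of_mem_nhds huv)) huv
  have hmixed : ∀ v ∈ Ioo (0 : ℝ) 1, ∀ u ∈ Ioo (0 : ℝ) 1,
      deriv (fun x => deriv (fun y => f (x, y)) v) u = mixedPartial f unitSquare (u, v) :=
    fun v hv u hu =>
      deriv_deriv_eq_mixedPartial hf uniqueDiffOn_unitSquare (unitSquare_mem_nhds hu hv)
  simp only [intervalIntegral_eq_setIntegral_Ioo zero_le_one,
    intervalIntegral_eq_setIntegral_Ioo hd.2]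
  rw [setIntegral_congr_fun measurableSet_Ioo fun v hv =>
      setIntegral_congr_fun measurableSet_Ioo fun u hu =>
        congrArg (max (X u - Y v - K) 0 * ·) (hmixed v hv u hu),
    setIntegral_congr_fun measurableSet_Ioo fun u hu => congrArg (X u * ·) (hfst u hu),
    setIntegral_congr_fun measurableSet_Ioo fun v hv => congrArg (Y v * ·) (hsnd v hv),
    setIntegral_congr_fun measurableSet_Ioo hsnd,
    ← intervalIntegral_eq_setIntegral_Ioo hd.2,
    ← setIntegral_mul_partialFst_indicator hf' hbot hd]
  exact setIntegral_max_sub_sub_zero_mul_mixedPartial hf hbot hright hX hY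
    (fun v hv => Ioo_subset_Icc_self (hd₁ v hv)) hd₂' hXY₁ hXY₂

end Copula

section Quantile

variable {F G : ℝ → ℝ} {S x w : ℝ}

lemma log_div_lt_iff_lt_mul_exp (hF : StrictMono F) (hFG : F (G w) = w) (hS : 0 < S)
    (hx : 0 < x) : F (log (x / S)) < w ↔ x < S * exp (G w) := by
  rw [← hFG, hF.lt_iff_lt, hFG, log_lt_iff_lt_exp (by positivity), div_lt_iff₀' hS]

lemma lt_log_div_iff_mul_exp_lt (hF : StrictMono F) (hFG : F (G w) = w) (hS : 0 < S)
    (hx : 0 < x) : w < F (log (x / S)) ↔ S * exp (G w) < x := by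
  rw [← hFG, hF.lt_iff_lt, hFG, lt_log_iff_exp_lt (by positivity), lt_div_iff₀' hS]

end Quantile

theorem stmt_0_general
    (C : ℝ → ℝ → ℝ)
    (hC : ContDiffOn ℝ 2 (fun p : ℝ × ℝ => C p.1 p.2) (Icc (0 : ℝ) 1 ×ˢ Icc (0 : ℝ) 1))
    (hground_u : ∀ u ∈ Icc (0 : ℝ) 1, C u 0 = 0)
    (hmarg_v : ∀ v ∈ Icc (0 : ℝ) 1, C 1 v = v)
    (c : ℝ → ℝ → ℝ)
    (hc : ∀ u v, c u v = deriv (fun x => deriv (fun y => C x y) v) u)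
    (F₁ F₂ G₁ G₂ : ℝ → ℝ)
    (hF₁m : StrictMono F₁) (hF₂m : StrictMono F₂)
    (hF₁r : range F₁ = Ioo 0 1) (hF₂r : range F₂ = Ioo 0 1)
    (hF₁G : ∀ w ∈ Ioo (0 : ℝ) 1, F₁ (G₁ w) = w)
    (hF₂G : ∀ w ∈ Ioo (0 : ℝ) 1, F₂ (G₂ w) = w)
    (hint₁ : IntegrableOn (fun w => exp (G₁ w)) (Ioo (0 : ℝ) 1))
    (hint₂ : IntegrableOn (fun w => exp (G₂ w)) (Ioo (0 : ℝ) 1))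
    (S₁ S₂ K : ℝ) (hS₁ : 0 < S₁) (hS₂ : 0 < S₂) (hK : 0 < K)
    (d₁ : ℝ → ℝ)
    (hd₁ : ∀ v, d₁ v = F₁ (log ((S₂ * exp (G₂ v) + K) / S₁)))
    (d₃ : ℝ) (hd₃ : d₃ = F₁ (log (K / S₁)))
    (d₂ : ℝ → ℝ)
    (hd₂ : ∀ u ∈ Ioo d₃ 1, d₂ u = F₂ (log ((S₁ * exp (G₁ u) - K) / S₂))) :
    ∫ v in (0 : ℝ)..1, ∫ u in (0 : ℝ)..1,
        max (S₁ * exp (G₁ u) - S₂ * exp (G₂ v) - K) 0 * c u v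
      = (∫ u in d₃..1, S₁ * exp (G₁ u) * deriv (fun x => C x (d₂ u)) u)
        - ((∫ v in (0 : ℝ)..1, S₂ * exp (G₂ v))
            - ∫ v in (0 : ℝ)..1, S₂ * exp (G₂ v) * deriv (fun y => C (d₁ v) y) v)
        - K * (1 - ∫ v in (0 : ℝ)..1, deriv (fun y => C (d₁ v) y) v) := by
  have hd₁mem (v : ℝ) : d₁ v ∈ Ioo (0 : ℝ) 1 := hd₁ v ▸ hF₁r ▸ mem_range_self _
  have hd₃mem : d₃ ∈ Ioo (0 : ℝ) 1 := hd₃ ▸ hF₁r ▸ mem_range_self _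
  have hd₂mem : ∀ u ∈ Ioo d₃ 1, d₂ u ∈ Ioo (0 : ℝ) 1 := fun u hu =>
    hd₂ u hu ▸ hF₂r ▸ mem_range_self _
  have hY (v : ℝ) : 0 < S₂ * exp (G₂ v) := by positivity
  have hX : ∀ u ∈ Ioo (0 : ℝ) 1, d₃ < u ↔ K < S₁ * exp (G₁ u) := fun u hu =>
    hd₃ ▸ log_div_lt_iff_lt_mul_exp hF₁m (hF₁G u hu) hS₁ hK
  have hXY₁ : ∀ u ∈ Ioo (0 : ℝ) 1, ∀ v ∈ Ioo (0 : ℝ) 1,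
      S₂ * exp (G₂ v) + K < S₁ * exp (G₁ u) ↔ d₁ v < u := fun u hu v _ =>
    hd₁ v ▸ (log_div_lt_iff_lt_mul_exp hF₁m (hF₁G u hu) hS₁ (add_pos (hY v) hK)).symm
  have hXY₂ : ∀ u ∈ Ioo (0 : ℝ) 1, ∀ v ∈ Ioo (0 : ℝ) 1,
      S₂ * exp (G₂ v) + K < S₁ * exp (G₁ u) ↔ v < (Ioi d₃).indicator d₂ u := fun u hu v hv => by
    by_cases hdu : u ∈ Ioi d₃
    · rw [indicator_of_mem hdu, hd₂ u ⟨hdu, hu.2⟩,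
        lt_log_div_iff_mul_exp_lt hF₂m (hF₂G v hv) hS₂ (sub_pos.2 ((hX u hu).1 hdu)),
        lt_sub_iff_add_lt]
    · have hle : S₁ * exp (G₁ u) ≤ K := not_lt.1 fun h => hdu ((hX u hu).2 h)
      rw [indicator_of_notMem hdu]
      exact iff_of_false (by linarith [hY v]) hv.1.not_gt
  simp only [hc]
  exact integral_max_sub_sub_zero_mul_deriv_deriv hC hground_u hmarg_v (hint₁.const_mul S₁)
    (hint₂.const_mul S₂) (Ioo_subset_Icc_self hd₃mem) (fun v _ => hd₁mem v) hd₂mem hXY₁ hXY₂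

/-- Main spread option pricing identity: for a twice continuously differentiable copula
`C` with density `c = ∂²C/∂u∂v ≥ 0`, and marginal quantile functions `G₁ = F₁⁻¹`,
`G₂ = F₂⁻¹`, the undiscounted price
`∫₀¹∫₀¹ max(S₁ e^{G₁(u)} − S₂ e^{G₂(v)} − K, 0) c(u,v) du dv` decomposes into three
one-dimensional integrals involving only first partial derivatives of `C`. -/
theorem stmt_0
    (C : ℝ → ℝ → ℝ)
    (hC : ContDiffOn ℝ 2 (fun p : ℝ × ℝ => C p.1 p.2)
      (Set.Icc (0:ℝ) 1 ×ˢ Set.Icc (0:ℝ) 1))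
    (hrange : ∀ u ∈ Set.Icc (0:ℝ) 1, ∀ v ∈ Set.Icc (0:ℝ) 1, C u v ∈ Set.Icc (0:ℝ) 1)
    (hground_u : ∀ u ∈ Set.Icc (0:ℝ) 1, C u 0 = 0)
    (hground_v : ∀ v ∈ Set.Icc (0:ℝ) 1, C 0 v = 0)
    (hmarg_u : ∀ u ∈ Set.Icc (0:ℝ) 1, C u 1 = u)
    (hmarg_v : ∀ v ∈ Set.Icc (0:ℝ) 1, C 1 v = v)
    (c : ℝ → ℝ → ℝ)
    (hc : ∀ u v, c u v = deriv (fun x => deriv (fun y => C x y) v) u)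
    (hc_nonneg : ∀ u ∈ Set.Icc (0:ℝ) 1, ∀ v ∈ Set.Icc (0:ℝ) 1, 0 ≤ c u v)
    (F₁ F₂ G₁ G₂ : ℝ → ℝ)
    (hF₁c : Continuous F₁) (hF₂c : Continuous F₂)
    (hF₁m : StrictMono F₁) (hF₂m : StrictMono F₂)
    (hF₁r : Set.range F₁ = Set.Ioo 0 1) (hF₂r : Set.range F₂ = Set.Ioo 0 1)
    (hG₁F : ∀ x : ℝ, G₁ (F₁ x) = x) (hG₂F : ∀ x : ℝ, G₂ (F₂ x) = x)
    (hF₁G : ∀ w ∈ Set.Ioo (0:ℝ) 1, F₁ (G₁ w) = w)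
    (hF₂G : ∀ w ∈ Set.Ioo (0:ℝ) 1, F₂ (G₂ w) = w)
    (hint₁ : IntegrableOn (fun w => Real.exp (G₁ w)) (Set.Ioo (0:ℝ) 1))
    (hint₂ : IntegrableOn (fun w => Real.exp (G₂ w)) (Set.Ioo (0:ℝ) 1))
    (S₁ S₂ K : ℝ) (hS₁ : 0 < S₁) (hS₂ : 0 < S₂) (hK : 0 < K)
    (d₁ : ℝ → ℝ)
    (hd₁ : ∀ v, d₁ v = F₁ (Real.log ((S₂ * Real.exp (G₂ v) + K) / S₁)))
    (d₃ : ℝ) (hd₃ : d₃ = F₁ (Real.log (K / S₁)))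
    (d₂ : ℝ → ℝ)
    (hd₂ : ∀ u ∈ Set.Ioo d₃ 1,
      d₂ u = F₂ (Real.log ((S₁ * Real.exp (G₁ u) - K) / S₂))) :
    ∫ v in (0:ℝ)..1, ∫ u in (0:ℝ)..1,
        max (S₁ * Real.exp (G₁ u) - S₂ * Real.exp (G₂ v) - K) 0 * c u v
      = (∫ u in d₃..1, S₁ * Real.exp (G₁ u) * deriv (fun x => C x (d₂ u)) u)
        - ((∫ v in (0:ℝ)..1, S₂ * Real.exp (G₂ v))
            - ∫ v in (0:ℝ)..1, S₂ * Real.exp (G₂ v) * deriv (fun y => C (d₁ v) y) v)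
        - K * (1 - ∫ v in (0:ℝ)..1, deriv (fun y => C (d₁ v) y) v) :=
  stmt_0_general C hC hground_u hmarg_v c hc F₁ F₂ G₁ G₂ hF₁m hF₂m hF₁r hF₂r hF₁G hF₂G hint₁ hint₂
    S₁ S₂ K hS₁ hS₂ hK d₁ hd₁ d₃ hd₃ d₂ hd₂
end

section
/- For θ > 0 with θ ≠ 1 and (u,v) in the open square (0,1)², the mixed second-order partial derivative of the Plackett copula equals the Plackett density: ∂²C_θ/∂u∂v(u,v) = θ·[1 + (θ−1)(u − 2uv + v)] / ([1+(θ−1)(u+v)]² − 4uvθ(θ−1))^{3/2}. -/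
open Real Set

/-- The Plackett copula for parameter `θ > 0`, `θ ≠ 1`. -/
noncomputable def plackett (θ u v : ℝ) : ℝ :=
  ((1 + (θ - 1) * (u + v)) -
      Real.sqrt ((1 + (θ - 1) * (u + v)) ^ 2 - 4 * u * v * θ * (θ - 1))) /
    (2 * (θ - 1))

/-!
Write `D` for the discriminant. Since `∂D/∂v = 2(θ - 1)N` with `N = 1 - (θ + 1)u + (θ - 1)v`, the
factor `θ - 1` cancels and `∂C/∂v = (1 - N / √D) / 2`. By symmetry `∂D/∂u = 2(θ - 1)M`, where `M`
is `N` with `u` and `v` exchanged, so `∂²C/∂u∂v = ((θ + 1)D + (θ - 1)NM) / (2 D^(3/2))`, whose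
numerator is the polynomial `2θ(1 + (θ - 1)(u - 2uv + v))`.
-/

lemma hasDerivAt_const_add_mul_add (a b c x : ℝ) :
    HasDerivAt (fun y ↦ a + b * (c + y)) b x := by
  simpa using (((hasDerivAt_id x).const_add c).const_mul b).const_add a

lemma hasDerivAt_div_sqrt {f g : ℝ → ℝ} {f' g' x : ℝ} (hf : HasDerivAt f f' x)
    (hg : HasDerivAt g g' x) (hpos : 0 < g x) :
    HasDerivAt (fun y ↦ f y / √(g y)) ((f' * g x - f x * g' / 2) / g x ^ ((3 : ℝ) / 2)) x := by
  have hsqrt : √(g x) ≠ 0 := (Real.sqrt_pos.mpr hpos).ne'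
  have hpow : g x ^ ((3 : ℝ) / 2) = √(g x) ^ 3 := by
    rw [Real.rpow_div_two_eq_sqrt _ hpos.le]
    norm_cast
  refine (hf.fun_div (hg.sqrt hpos.ne') hsqrt).congr_deriv ?_
  rw [hpow]
  field_simp
  rw [Real.sq_sqrt hpos.le]
  ring

/-- The discriminant `D` under the square root in the Plackett copula. -/
def plackettDiscr (θ u v : ℝ) : ℝ :=
  (1 + (θ - 1) * (u + v)) ^ 2 - 4 * u * v * θ * (θ - 1)

lemma plackettDiscr_comm (θ u v : ℝ) : plackettDiscr θ u v = plackettDiscr θ v u := by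
  unfold plackettDiscr
  ring

lemma plackettDiscr_eq_add (θ u v : ℝ) :
    plackettDiscr θ u v =
      (1 - u - v) ^ 2 + θ ^ 2 * (u - v) ^ 2 + 2 * θ * (u * (1 - u) + v * (1 - v)) := by
  unfold plackettDiscr
  ring

lemma plackettDiscr_pos {θ u v : ℝ} (hθ : 0 < θ) (hu : u ∈ Icc 0 1) (hv : v ∈ Icc 0 1) :
    0 < plackettDiscr θ u v := by
  have hu' : 0 ≤ u * (1 - u) := mul_nonneg hu.1 (sub_nonneg.mpr hu.2)
  have hv' : 0 ≤ v * (1 - v) := mul_nonneg hv.1 (sub_nonneg.mpr hv.2)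
  rw [plackettDiscr_eq_add]
  rcases eq_or_ne u v with rfl | huv
  · -- Since `(1 - 2u)² = 1 - 4u(1 - u)`, the first and last terms cannot both vanish.
    rcases hu'.eq_or_lt with h | h
    · nlinarith
    · positivity
  · have : 0 < (u - v) ^ 2 := sq_pos_of_ne_zero (sub_ne_zero.mpr huv)
    positivity

lemma hasDerivAt_plackettDiscr_right (θ u v : ℝ) :
    HasDerivAt (plackettDiscr θ u) (2 * (θ - 1) * (1 - (θ + 1) * u + (θ - 1) * v)) v := by
  have hprod : HasDerivAt (fun y ↦ 4 * u * y * θ * (θ - 1)) (4 * u * θ * (θ - 1)) v := by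
    simpa using (((hasDerivAt_id v).const_mul (4 * u)).mul_const θ).mul_const (θ - 1)
  have hlin := hasDerivAt_const_add_mul_add 1 (θ - 1) u v
  refine ((hlin.fun_pow 2).fun_sub hprod).congr_deriv ?_
  push_cast
  ring

lemma hasDerivAt_plackettDiscr_left (θ u v : ℝ) :
    HasDerivAt (fun x ↦ plackettDiscr θ x v)
      (2 * (θ - 1) * (1 - (θ + 1) * v + (θ - 1) * u)) u := by
  simpa only [plackettDiscr_comm θ _ v] using hasDerivAt_plackettDiscr_right θ v u

lemma hasDerivAt_plackett_right {θ u v : ℝ} (hθ1 : θ ≠ 1) (hD : 0 < plackettDiscr θ u v) :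
    HasDerivAt (plackett θ u)
      ((1 - (1 - (θ + 1) * u + (θ - 1) * v) / √(plackettDiscr θ u v)) / 2) v := by
  have hsqrt := (hasDerivAt_plackettDiscr_right θ u v).sqrt hD.ne'
  have hlin := hasDerivAt_const_add_mul_add 1 (θ - 1) u v
  refine ((hlin.fun_sub hsqrt).div_const (2 * (θ - 1))).congr_deriv ?_
  have hθ' : θ - 1 ≠ 0 := sub_ne_zero.mpr hθ1
  field_simp

lemma eventually_plackettDiscr_pos {θ u v : ℝ} (hD : 0 < plackettDiscr θ u v) :
    ∀ᶠ x in nhds u, 0 < plackettDiscr θ x v :=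
  (hasDerivAt_plackettDiscr_left θ u v).continuousAt.eventually_const_lt hD

theorem stmt_7_general {θ u v : ℝ} (hθ1 : θ ≠ 1) (hD : 0 < plackettDiscr θ u v) :
    HasDerivAt (fun x ↦ deriv (plackett θ x) v)
      (θ * (1 + (θ - 1) * (u - 2 * u * v + v)) / plackettDiscr θ u v ^ ((3 : ℝ) / 2)) u := by
  have hpartial : (fun x ↦ deriv (plackett θ x) v) =ᶠ[nhds u]
      fun x ↦ (1 - (1 - (θ + 1) * x + (θ - 1) * v) / √(plackettDiscr θ x v)) / 2 :=
    (eventually_plackettDiscr_pos hD).mono fun _ hx ↦ (hasDerivAt_plackett_right hθ1 hx).deriv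
  have hnum : HasDerivAt (fun x ↦ 1 - (θ + 1) * x + (θ - 1) * v) (-(θ + 1)) u := by
    simpa using (((hasDerivAt_id u).const_mul (θ + 1)).const_sub 1).add_const ((θ - 1) * v)
  have hquot := hasDerivAt_div_sqrt hnum (hasDerivAt_plackettDiscr_left θ u v) hD
  have hdensity : (θ + 1) * plackettDiscr θ u v +
      (θ - 1) * (1 - (θ + 1) * u + (θ - 1) * v) * (1 - (θ + 1) * v + (θ - 1) * u) =
        2 * (θ * (1 + (θ - 1) * (u - 2 * u * v + v))) := by
    unfold plackettDiscr
    ring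
  refine (((hquot.const_sub 1).div_const 2).congr_of_eventuallyEq hpartial).congr_deriv ?_
  linear_combination hdensity / (2 * plackettDiscr θ u v ^ ((3 : ℝ) / 2))

/-- On the open unit square, the mixed second-order partial derivative of the
Plackett copula equals the Plackett density. -/
theorem stmt_7 (θ : ℝ) (hθ : 0 < θ) (hθ1 : θ ≠ 1) :
    ∀ u ∈ Set.Ioo (0:ℝ) 1, ∀ v ∈ Set.Ioo (0:ℝ) 1,
      deriv (fun x => deriv (fun y => plackett θ x y) v) u
        = θ * (1 + (θ - 1) * (u - 2 * u * v + v)) /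
          ((1 + (θ - 1) * (u + v)) ^ 2 - 4 * u * v * θ * (θ - 1)) ^ ((3:ℝ)/2) := by
  intro u hu v hv
  exact (stmt_7_general hθ1 (plackettDiscr_pos hθ (Ioo_subset_Icc_self hu)
    (Ioo_subset_Icc_self hv))).deriv
end

section
/- For every fixed (u,v) ∈ [0,1]², the Plackett copula converges to the lower Fréchet–Hoeffding bound as θ → 0⁺: lim_{θ→0⁺} ([1+(θ−1)(u+v)] − √([1+(θ−1)(u+v)]² − 4uvθ(θ−1)))/(2(θ−1)) = max(u + v − 1, 0). -/
open Real Set Filter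

open scoped Topology

/-- The Plackett copula `C_θ(u, v)`, extended by its formula to all real `θ`, `u`, `v`. The radicand
is nonnegative for `0 < θ` and `u, v ∈ [0, 1]`; elsewhere it may be negative, and `√` is then `0`.
At `θ = 1` division by zero gives `0` instead of the independence copula `u * v`. -/
noncomputable def plackettCopula (θ u v : ℝ) : ℝ :=
  ((1 + (θ - 1) * (u + v)) - √((1 + (θ - 1) * (u + v)) ^ 2 - 4 * u * v * θ * (θ - 1))) /
    (2 * (θ - 1))

theorem continuousAt_plackettCopula {θ : ℝ} (hθ : θ ≠ 1) (u v : ℝ) :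
    ContinuousAt (fun t ↦ plackettCopula t u v) θ := by
  have denom_ne_zero : 2 * (θ - 1) ≠ 0 := mul_ne_zero two_ne_zero (sub_ne_zero.mpr hθ)
  unfold plackettCopula
  fun_prop (disch := exact denom_ne_zero)

theorem plackettCopula_zero (u v : ℝ) : plackettCopula 0 u v = max (u + v - 1) 0 := by
  have radicand_eq :
      (1 + (0 - 1) * (u + v)) ^ 2 - 4 * u * v * 0 * (0 - 1) = (u + v - 1) ^ 2 := by
    ring
  calc plackettCopula 0 u v
      = ((u + v - 1) + |u + v - 1|) / 2 := by
        rw [plackettCopula, radicand_eq, sqrt_sq_eq_abs]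
        ring
    _ = max (u + v - 1) 0 := by
        rw [add_abs_eq_two_nsmul_posPart, nsmul_eq_mul, Nat.cast_ofNat,
          mul_div_cancel_left₀ _ two_ne_zero, posPart_def]

theorem stmt_11_general (u v : ℝ) :
    Tendsto (fun θ ↦ plackettCopula θ u v) (𝓝 0) (𝓝 (max (u + v - 1) 0)) := by
  rw [← plackettCopula_zero]
  exact continuousAt_plackettCopula zero_ne_one u v

/-- The Plackett copula converges to the lower Fréchet–Hoeffding bound
`max(u + v − 1, 0)` as `θ → 0⁺`. -/
theorem stmt_11 (u v : ℝ) (hu : u ∈ Set.Icc (0:ℝ) 1) (hv : v ∈ Set.Icc (0:ℝ) 1) :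
    Filter.Tendsto
      (fun θ : ℝ =>
        ((1 + (θ - 1) * (u + v)) -
            Real.sqrt ((1 + (θ - 1) * (u + v)) ^ 2 - 4 * u * v * θ * (θ - 1))) /
          (2 * (θ - 1)))
      (nhdsWithin 0 (Set.Ioi (0:ℝ))) (nhds (max (u + v - 1) 0)) := by
  exact (stmt_11_general u v).mono_left nhdsWithin_le_nhds
end

section
/- For every fixed (u,v) ∈ [0,1]², the Plackett copula converges to the upper Fréchet–Hoeffding bound as θ → ∞: lim_{θ→∞} ([1+(θ−1)(u+v)] − √([1+(θ−1)(u+v)]² − 4uvθ(θ−1)))/(2(θ−1)) = min(u, v). -/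
open Real Set Filter

/-!
For `θ > 1` the Plackett copula is the smaller root of
`(θ - 1) X² - (1 + (θ - 1) (u + v)) X + u v θ`. Dividing by `θ - 1` makes this polynomial monic, and
as `θ → ∞` its coefficients tend to those of `X² - (u + v) X + u v = (X - u) (X - v)`, whose
smaller root is `min u v`.
-/

open scoped Topology

/-- The smaller real root of `X² - s X + p`, in terms of the sum `s` and the product `p` of the
roots. If the discriminant is negative, the value is `s / 2`, the real part of the two roots. -/
noncomputable def smallerRoot (s p : ℝ) : ℝ :=
  (s - √(s ^ 2 - 4 * p)) / 2

lemma smallerRoot_add_mul (a b : ℝ) : smallerRoot (a + b) (a * b) = min a b := by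
  have discriminant_eq : (a + b) ^ 2 - 4 * (a * b) = (b - a) ^ 2 := by ring
  rw [smallerRoot, discriminant_eq, sqrt_sq_eq_abs, inf_eq_half_smul_add_sub_abs_sub' ℝ,
    smul_eq_mul, div_eq_inv_mul]

lemma smallerRoot_mul_sq_mul {c : ℝ} (hc : 0 ≤ c) (s p : ℝ) :
    smallerRoot (c * s) (c ^ 2 * p) = c * smallerRoot s p := by
  have discriminant_eq : (c * s) ^ 2 - 4 * (c ^ 2 * p) = c ^ 2 * (s ^ 2 - 4 * p) := by ring
  rw [smallerRoot, smallerRoot, discriminant_eq, sqrt_mul (sq_nonneg c), sqrt_sq hc]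
  ring

lemma continuous_smallerRoot : Continuous fun x : ℝ × ℝ ↦ smallerRoot x.1 x.2 := by
  unfold smallerRoot
  fun_prop

lemma plackettCopula_eq_smallerRoot_div (θ u v : ℝ) :
    plackettCopula θ u v =
      smallerRoot (1 + (θ - 1) * (u + v)) (u * v * θ * (θ - 1)) / (θ - 1) := by
  simp only [plackettCopula, smallerRoot, div_div, mul_assoc]

lemma plackettCopula_eq_smallerRoot {θ : ℝ} (hθ : 1 < θ) (u v : ℝ) :
    plackettCopula θ u v =
      smallerRoot ((θ - 1)⁻¹ + (u + v)) (u * v * (1 + (θ - 1)⁻¹)) := by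
  have hpos : 0 < θ - 1 := sub_pos.mpr hθ
  have sum_eq : 1 + (θ - 1) * (u + v) = (θ - 1) * ((θ - 1)⁻¹ + (u + v)) := by
    field_simp
  have product_eq :
      u * v * θ * (θ - 1) = (θ - 1) ^ 2 * (u * v * (1 + (θ - 1)⁻¹)) := by
    field_simp
    ring
  rw [plackettCopula_eq_smallerRoot_div, sum_eq, product_eq, smallerRoot_mul_sq_mul hpos.le,
    mul_div_cancel_left₀ _ hpos.ne']

/-- For `u = v` outside `[0, 1]` and large `θ` the square root is that of a negative number, hence
`0`; everywhere else the radicand is eventually nonnegative. -/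
theorem stmt_12_general (u v : ℝ) :
    Tendsto (fun θ ↦ plackettCopula θ u v) atTop (𝓝 (min u v)) := by
  have inv_tendsto : Tendsto (fun θ : ℝ ↦ (θ - 1)⁻¹) atTop (𝓝 0) :=
    tendsto_inv_atTop_zero.comp (tendsto_atTop_add_const_right _ (-1) tendsto_id)
  have sum_tendsto : Tendsto (fun θ : ℝ ↦ (θ - 1)⁻¹ + (u + v)) atTop (𝓝 (u + v)) := by
    simpa only [zero_add] using inv_tendsto.add_const (u + v)
  have product_tendsto :
      Tendsto (fun θ : ℝ ↦ u * v * (1 + (θ - 1)⁻¹)) atTop (𝓝 (u * v)) := by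
    simpa only [add_zero, mul_one] using (inv_tendsto.const_add 1).const_mul (u * v)
  have root_tendsto := (continuous_smallerRoot.tendsto (u + v, u * v)).comp
    (sum_tendsto.prodMk_nhds product_tendsto)
  rw [smallerRoot_add_mul] at root_tendsto
  refine root_tendsto.congr' ?_
  filter_upwards [eventually_gt_atTop 1] with θ hθ
  exact (plackettCopula_eq_smallerRoot hθ u v).symm

/-- The Plackett copula converges to the upper Fréchet–Hoeffding bound
`min(u, v)` as `θ → ∞`. -/
theorem stmt_12 (u v : ℝ) (hu : u ∈ Set.Icc (0:ℝ) 1) (hv : v ∈ Set.Icc (0:ℝ) 1) :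
    Filter.Tendsto
      (fun θ : ℝ =>
        ((1 + (θ - 1) * (u + v)) -
            Real.sqrt ((1 + (θ - 1) * (u + v)) ^ 2 - 4 * u * v * θ * (θ - 1))) /
          (2 * (θ - 1)))
      Filter.atTop (nhds (min u v)) :=
  stmt_12_general u v
end

section
/- For θ > 0 with θ ≠ 1, Spearman's rho of the Plackett copula satisfies 12·∫₀¹∫₀¹ C_θ(u,v) du dv − 3 = (θ+1)/(θ−1) − 2θ·ln(θ)/(θ−1)², where C_θ(u,v) = ([1+(θ−1)(u+v)] − √([1+(θ−1)(u+v)]² − 4uvθ(θ−1)))/(2(θ−1)). -/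
/-!
For fixed `v ∈ (0, 1)` the radicand of `plackett θ u v` is `w ^ 2 + k`, where
`w = (θ - 1) * u + (1 - (θ + 1) * v)` is affine in `u` and `k = 4 * θ * v * (1 - v)` is positive.
At `u = 0` and `u = 1` the root is affine in `v`, and the logarithm in the primitive of
`√(w ^ 2 + k)` contributes exactly `log θ`. The slice integral is therefore
`v / 2 + ρ * (v * (1 - v)) / 2`, with `ρ` independent of `v`, and since `∫ v * (1 - v) = 1 / 6`
this `ρ` is Spearman's rho.
-/

open Real Set intervalIntegral

section SqrtSqAdd

variable {k : ℝ} (hk : 0 < k)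
include hk

lemma add_sqrt_sq_add_pos (x : ℝ) : 0 < x + √(x ^ 2 + k) := by
  have abs_lt_sqrt : |x| < √(x ^ 2 + k) := Real.lt_sqrt_of_sq_lt (by rw [sq_abs]; linarith)
  linarith [neg_abs_le x]

lemma hasDerivAt_sqrt_sq_add (x : ℝ) :
    HasDerivAt (fun y : ℝ ↦ √(y ^ 2 + k)) (x / √(x ^ 2 + k)) x := by
  have hpos : 0 < x ^ 2 + k := by positivity
  convert ((hasDerivAt_pow 2 x).add_const k).sqrt hpos.ne' using 1
  field_simp
  norm_num [mul_comm]

lemma hasDerivAt_log_add_sqrt_sq_add (x : ℝ) :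
    HasDerivAt (fun y : ℝ ↦ log (y + √(y ^ 2 + k))) (√(x ^ 2 + k))⁻¹ x := by
  have hsum := add_sqrt_sq_add_pos hk x
  convert ((hasDerivAt_id' x).fun_add (hasDerivAt_sqrt_sq_add hk x)).log hsum.ne' using 1
  field_simp
  ring

lemma hasDerivAt_primitive_sqrt_sq_add (x : ℝ) :
    HasDerivAt (fun y : ℝ ↦ (y * √(y ^ 2 + k) + k * log (y + √(y ^ 2 + k))) / 2)
      √(x ^ 2 + k) x := by
  have hsq : √(x ^ 2 + k) ^ 2 = x ^ 2 + k := Real.sq_sqrt (by positivity)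
  refine ((((hasDerivAt_id' x).fun_mul (hasDerivAt_sqrt_sq_add hk x)).fun_add
    ((hasDerivAt_log_add_sqrt_sq_add hk x).const_mul k)).div_const 2).congr_deriv ?_
  field_simp
  linarith

lemma integral_sqrt_sq_add (a b : ℝ) :
    ∫ x in a..b, √(x ^ 2 + k) = (b * √(b ^ 2 + k) - a * √(a ^ 2 + k)
      + k * log ((b + √(b ^ 2 + k)) / (a + √(a ^ 2 + k)))) / 2 := by
  rw [integral_eq_sub_of_hasDerivAt (fun x _ ↦ hasDerivAt_primitive_sqrt_sq_add hk x)
    (Continuous.intervalIntegrable (by fun_prop) a b),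
    log_div (add_sqrt_sq_add_pos hk b).ne' (add_sqrt_sq_add_pos hk a).ne']
  ring

end SqrtSqAdd

lemma plackett_eq_sub_sqrt_sq_add (θ u v : ℝ) :
    plackett θ u v = (1 + (θ - 1) * (u + v)
      - √(((θ - 1) * u + (1 - (θ + 1) * v)) ^ 2 + 4 * θ * v * (1 - v))) / (2 * (θ - 1)) := by
  rw [plackett]
  congr 3
  ring

section Slice

variable {θ v : ℝ} (hθ : 0 < θ) (hθ1 : θ ≠ 1) (hv : v ∈ Ioo (0 : ℝ) 1)
include hθ hθ1 hv

lemma integral_sqrt_plackett_radicand :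
    ∫ u in (0 : ℝ)..1, √(((θ - 1) * u + (1 - (θ + 1) * v)) ^ 2 + 4 * θ * v * (1 - v))
      = (θ + 1) / 2 + (2 * θ * log θ / (θ - 1) - (θ + 1)) * (v * (1 - v)) := by
  have hθ' : θ - 1 ≠ 0 := sub_ne_zero.mpr hθ1
  obtain ⟨hv0, hv1⟩ := hv
  have : 0 < 1 - v := sub_pos.mpr hv1
  have hk : 0 < 4 * θ * v * (1 - v) := by positivity
  have sqrt_at_zero : √((1 - (θ + 1) * v) ^ 2 + 4 * θ * v * (1 - v)) = (1 - v) + θ * v :=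
    (Real.sqrt_eq_iff_eq_sq (by positivity) (by positivity)).mpr (by ring)
  have sqrt_at_one : √((θ - (θ + 1) * v) ^ 2 + 4 * θ * v * (1 - v)) = θ * (1 - v) + v :=
    (Real.sqrt_eq_iff_eq_sq (by positivity) (by positivity)).mpr (by ring)
  have endpoint_ratio : (θ - (θ + 1) * v + (θ * (1 - v) + v))
      / (1 - (θ + 1) * v + ((1 - v) + θ * v)) = θ := by
    rw [show θ - (θ + 1) * v + (θ * (1 - v) + v) = θ * (2 * (1 - v)) by ring,
      show 1 - (θ + 1) * v + ((1 - v) + θ * v) = 2 * (1 - v) by ring]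
    exact mul_div_cancel_right₀ θ (by positivity)
  rw [integral_comp_mul_add (fun w ↦ √(w ^ 2 + 4 * θ * v * (1 - v))) hθ',
    integral_sqrt_sq_add hk,
    show (θ - 1) * 1 + (1 - (θ + 1) * v) = θ - (θ + 1) * v by ring,
    show (θ - 1) * 0 + (1 - (θ + 1) * v) = 1 - (θ + 1) * v by ring,
    sqrt_at_zero, sqrt_at_one, endpoint_ratio, smul_eq_mul]
  field_simp
  ring

lemma integral_plackett :
    ∫ u in (0 : ℝ)..1, plackett θ u v
      = v / 2 + ((θ + 1) / (θ - 1) - 2 * θ * log θ / (θ - 1) ^ 2) * (v * (1 - v)) / 2 := by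
  have hθ' : θ - 1 ≠ 0 := sub_ne_zero.mpr hθ1
  have integral_affine :
      ∫ u in (0 : ℝ)..1, (1 + (θ - 1) * (u + v)) = 1 + (θ - 1) * (1 / 2 + v) := by
    rw [integral_add (by simp) (Continuous.intervalIntegrable (by fun_prop) _ _),
      integral_const_mul, integral_add (by simp) (by simp)]
    norm_num
  simp only [plackett_eq_sub_sqrt_sq_add]
  rw [integral_div, integral_sub (Continuous.intervalIntegrable (by fun_prop) _ _)
    (Continuous.intervalIntegrable (by fun_prop) _ _), integral_affine,
    integral_sqrt_plackett_radicand hθ hθ1 hv]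
  field_simp
  ring

end Slice

lemma integral_div_two_add_mul_mul_one_sub (r : ℝ) :
    ∫ v in (0 : ℝ)..1, (v / 2 + r * (v * (1 - v)) / 2) = 1 / 4 + r / 12 := by
  have integral_mul_one_sub : ∫ v in (0 : ℝ)..1, v * (1 - v) = 1 / 6 := by
    simp only [mul_sub, mul_one, ← sq]
    rw [integral_sub (by simp) (by simp), integral_id, integral_pow]
    norm_num
  rw [integral_add (Continuous.intervalIntegrable (by fun_prop) _ _)
    (Continuous.intervalIntegrable (by fun_prop) _ _), integral_div, integral_div,
    integral_const_mul, integral_id, integral_mul_one_sub]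
  ring

/-- Closed form of Spearman's rho for the Plackett copula:
`12 ∫₀¹∫₀¹ C_θ(u,v) du dv − 3 = (θ+1)/(θ−1) − 2θ ln θ/(θ−1)²`. -/
theorem stmt_14 (θ : ℝ) (hθ : 0 < θ) (hθ1 : θ ≠ 1) :
    12 * (∫ v in (0:ℝ)..1, ∫ u in (0:ℝ)..1, plackett θ u v) - 3
      = (θ + 1) / (θ - 1) - 2 * θ * Real.log θ / (θ - 1) ^ 2 := by
  rw [integral_congr_Ioo_of_le zero_le_one fun v hv ↦ integral_plackett hθ hθ1 hv,
    integral_div_two_add_mul_mul_one_sub]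
  ring
end

section
/- Let Z be a standard normal random variable, let r, λ, ω, α, β, γ, u, A₊, B₊ ∈ ℝ and h > 0, S > 0, with 2αB₊ < 1. Define the one-step Heston–Nandi GARCH(1,1) update S' = S·exp(r + λh + √h·Z) and h' = ω + βh + α(Z − γ√h)². Then E[(S')^u · exp(A₊ + B₊·h')] = S^u · exp(A + B·h), where A = A₊ + u·r + B₊·ω − (1/2)·ln(1 − 2αB₊) and B = u(λ+γ) − γ²/2 + β·B₊ + (1/2)·(u − γ)²/(1 − 2αB₊). -/
open Real MeasureTheory ProbabilityTheory

/-!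
The shifted shock `Z - γ√h` has law `N(-γ√h, 1)`, and in terms of it the exponent to be averaged is,
up to an additive constant, `αB₊ (Z - γ√h)² + u√h (Z - γ√h)`. The exponential moment of a quadratic
polynomial in a Gaussian variable is explicit. Because both the mean of the shifted shock and the
linear coefficient are proportional to `√h`, its exponent is linear in `h`; completing the
square turns it into `((u - γ)² / (1 - 2αB₊) - γ²) h / 2`, whence the terms `-γ²/2` and
`(u - γ)² / (2 (1 - 2αB₊))` of `B`.
-/

theorem integral_rexp_quadratic {b : ℝ} (hb : b < 0) (c d : ℝ) :
    ∫ x : ℝ, exp (b * x ^ 2 + c * x + d) = √(π / -b) * exp (d - c ^ 2 / (4 * b)) := by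
  have hb' : 0 ≤ π / -b := div_nonneg pi_nonneg (neg_nonneg.2 hb.le)
  have complex_form := integral_cexp_quadratic (b := b) (by simpa using hb) c d
  rw [← Complex.ofReal_inj, ← integral_complex_ofReal, sqrt_eq_rpow]
  push_cast [Complex.ofReal_cpow hb']
  exact complex_form

theorem inv_sqrt_eq_exp_neg_half_log {x : ℝ} (hx : 0 < x) : (√x)⁻¹ = exp (-(log x / 2)) := by
  rw [exp_neg, ← log_sqrt hx.le, exp_log (sqrt_pos.2 hx)]

section Gaussian

open scoped NNReal

variable {v : ℝ≥0}

theorem gaussianPDFReal_mul_exp_quadratic (hv : v ≠ 0) (m a b x : ℝ) :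
    gaussianPDFReal m v x * exp (a * x ^ 2 + b * x) =
      (√(2 * π * v))⁻¹ *
        exp (-((1 - 2 * a * v) / (2 * v)) * x ^ 2 + (m / v + b) * x + -(m ^ 2 / (2 * v))) := by
  have hv' : (v : ℝ) ≠ 0 := NNReal.coe_ne_zero.2 hv
  rw [gaussianPDFReal, mul_assoc, ← exp_add]
  congr 2
  field

variable {m a : ℝ}

theorem integral_exp_quadratic_gaussianReal (ha : 2 * a * v < 1) (b : ℝ) :
    ∫ x, exp (a * x ^ 2 + b * x) ∂gaussianReal m v =
      (√(1 - 2 * a * v))⁻¹ *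
        exp ((2 * a * m ^ 2 + 2 * b * m + b ^ 2 * v) / (2 * (1 - 2 * a * v))) := by
  obtain rfl | hv := eq_or_ne v 0
  · suffices a * m ^ 2 + b * m = (2 * a * m ^ 2 + 2 * b * m) / 2 by simpa
    ring
  have hv_pos : (0 : ℝ) < v := NNReal.coe_pos.2 (pos_iff_ne_zero.2 hv)
  have hD : 0 < 1 - 2 * a * v := sub_pos.2 ha
  have leading_neg : -((1 - 2 * a * v) / (2 * v)) < 0 :=
    neg_neg_of_pos (div_pos hD (mul_pos two_pos hv_pos))
  have normalization : (√(2 * π * v))⁻¹ * √(π / - -((1 - 2 * a * v) / (2 * v))) =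
      (√(1 - 2 * a * v))⁻¹ := by
    rw [← sqrt_inv, ← sqrt_inv, ← sqrt_mul (by positivity)]
    congr 1
    field
  have exponent : -(m ^ 2 / (2 * v)) - (m / v + b) ^ 2 / (4 * -((1 - 2 * a * v) / (2 * v))) =
      (2 * a * m ^ 2 + 2 * b * m + b ^ 2 * v) / (2 * (1 - 2 * a * v)) := by
    generalize hD_eq : 1 - 2 * a * (v : ℝ) = D at hD ⊢
    field_simp
    linear_combination (4 * m ^ 2) * hD_eq
  simp_rw [integral_gaussianReal_eq_integral_smul hv, smul_eq_mul,
    gaussianPDFReal_mul_exp_quadratic hv]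
  rw [integral_const_mul, integral_rexp_quadratic leading_neg, ← mul_assoc, normalization, exponent]

theorem integral_exp_quadratic_of_hasLaw_gaussianReal {Ω : Type*} [MeasurableSpace Ω]
    {P : Measure Ω} {X : Ω → ℝ} (hX : HasLaw X (gaussianReal m v) P) (ha : 2 * a * v < 1) (b : ℝ) :
    ∫ x, exp (a * X x ^ 2 + b * X x) ∂P =
      (√(1 - 2 * a * v))⁻¹ *
        exp ((2 * a * m ^ 2 + 2 * b * m + b ^ 2 * v) / (2 * (1 - 2 * a * v))) := by
  rw [← integral_exp_quadratic_gaussianReal ha b]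
  exact hX.integral_comp (f := fun y ↦ exp (a * y ^ 2 + b * y)) (by fun_prop)

end Gaussian

namespace HestonNandi

/-- The spot price `S' = S exp(r + λh + √h z)` after one period, given the spot price `S`, the
conditional variance `h` and the value `z` of the shock. -/
noncomputable def spotUpdate (r lam h S z : ℝ) : ℝ :=
  S * exp (r + lam * h + √h * z)

/-- The conditional variance `h' = ω + βh + α(z - γ√h)²` of the next period, given the current
conditional variance `h` and the value `z` of the shock. -/
noncomputable def varianceUpdate (ω α β γ h z : ℝ) : ℝ :=
  ω + β * h + α * (z - γ * √h) ^ 2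

theorem spotUpdate_rpow_mul_exp_varianceUpdate {S h : ℝ} (hS : 0 ≤ S) (hh : 0 ≤ h)
    (r lam ω α β γ u A B z : ℝ) :
    spotUpdate r lam h S z ^ u * exp (A + B * varianceUpdate ω α β γ h z) =
      S ^ u * exp (A + u * r + B * ω + (u * (lam + γ) + β * B) * h) *
        exp (α * B * (z - γ * √h) ^ 2 + u * √h * (z - γ * √h)) := by
  rw [spotUpdate, varianceUpdate, mul_rpow hS (exp_nonneg _), ← exp_mul, mul_assoc, mul_assoc,
    ← exp_add, ← exp_add]
  congr 2
  linear_combination u * γ * sq_sqrt hh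

theorem integral_exp_quadratic_sub_mul_sqrt {Ω : Type*} [MeasurableSpace Ω] {P : Measure Ω}
    {Z : Ω → ℝ} (hZ : HasLaw Z (gaussianReal 0 1) P) {a h : ℝ} (ha : 2 * a < 1) (hh : 0 ≤ h)
    (γ u : ℝ) :
    ∫ x, exp (a * (Z x - γ * √h) ^ 2 + u * √h * (Z x - γ * √h)) ∂P =
      exp (-(log (1 - 2 * a) / 2) + ((u - γ) ^ 2 / (1 - 2 * a) - γ ^ 2) / 2 * h) := by
  have hD : 0 < 1 - 2 * a := sub_pos.2 ha
  have shifted_law : HasLaw (fun x ↦ Z x - γ * √h) (gaussianReal (0 - γ * √h) 1) P :=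
    gaussianReal_sub_const hZ (γ * √h)
  have exponent : (2 * a * (0 - γ * √h) ^ 2 + 2 * (u * √h) * (0 - γ * √h) + (u * √h) ^ 2) /
      (2 * (1 - 2 * a)) = ((u - γ) ^ 2 / (1 - 2 * a) - γ ^ 2) / 2 * h := by
    rw [div_eq_iff (by positivity), div_sub' hD.ne']
    field_simp
    linear_combination (2 * a * γ ^ 2 - 2 * u * γ + u ^ 2) * sq_sqrt hh
  have moment := integral_exp_quadratic_of_hasLaw_gaussianReal shifted_law
    (by simpa only [NNReal.coe_one, mul_one] using ha) (u * √h)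
  rw [moment, NNReal.coe_one, mul_one, mul_one, exponent, inv_sqrt_eq_exp_neg_half_log hD,
    ← exp_add]

end HestonNandi

/-- One-step backward recursion for the log-linear conditional moment generating function
of the Heston–Nandi affine GARCH(1,1) model: with `S' = S exp(r + λh + √h Z)` and
`h' = ω + βh + α(Z − γ√h)²`, one has `E[(S')^u exp(A₊ + B₊ h')] = S^u exp(A + B h)` where
`A = A₊ + u r + B₊ ω − (1/2) ln(1 − 2αB₊)` and
`B = u(λ+γ) − γ²/2 + β B₊ + (1/2)(u − γ)²/(1 − 2αB₊)`. -/
theorem stmt_16 {Ω : Type*} [MeasurableSpace Ω] (μ : Measure Ω) [IsProbabilityMeasure μ]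
    (Z : Ω → ℝ) (hZmeas : Measurable Z)
    (hZ : Measure.map Z μ = gaussianReal 0 1)
    (r lam ω α β γ u Aplus Bplus h S : ℝ) (hh : 0 < h) (hS : 0 < S)
    (hαB : 2 * α * Bplus < 1) :
    ∫ x, (S * Real.exp (r + lam * h + Real.sqrt h * Z x)) ^ u *
        Real.exp (Aplus + Bplus * (ω + β * h + α * (Z x - γ * Real.sqrt h) ^ 2)) ∂μ
      = S ^ u *
        Real.exp ((Aplus + u * r + Bplus * ω - (1/2) * Real.log (1 - 2 * α * Bplus)) +
          (u * (lam + γ) - γ ^ 2 / 2 + β * Bplus +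
            (1/2) * (u - γ) ^ 2 / (1 - 2 * α * Bplus)) * h) := by
  have hZ_law : HasLaw Z (gaussianReal 0 1) μ := ⟨hZmeas.aemeasurable, hZ⟩
  have ha : 2 * (α * Bplus) < 1 := by rwa [← mul_assoc]
  calc
    _ = ∫ x, HestonNandi.spotUpdate r lam h S (Z x) ^ u *
          exp (Aplus + Bplus * HestonNandi.varianceUpdate ω α β γ h (Z x)) ∂μ := rfl
    _ = S ^ u * exp (Aplus + u * r + Bplus * ω + (u * (lam + γ) + β * Bplus) * h) *
          exp (-(log (1 - 2 * (α * Bplus)) / 2) +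
            ((u - γ) ^ 2 / (1 - 2 * (α * Bplus)) - γ ^ 2) / 2 * h) := by
      simp_rw [HestonNandi.spotUpdate_rpow_mul_exp_varianceUpdate hS.le hh.le]
      rw [integral_const_mul, HestonNandi.integral_exp_quadratic_sub_mul_sqrt hZ_law ha hh.le]
    _ = _ := by
      rw [mul_assoc, ← exp_add, ← mul_assoc 2 α Bplus]
      congr 2
      ring
end
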